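/- Let (X,d) be an ultrametric space with base point a ∈ X. Then the chordal function d_a on Ẋ = X ∪ {∞}, defined by d_a(x,y) = d(x,y)/(max{1,d(x,a)}·max{1,d(y,a)}) for x,y ∈ X, d_a(x,∞) = 1/max{1,d(x,a)}, and d_a(∞,∞) = 0, is an ultrametric on Ẋ. -/

import Mathlib

/-- The chordal function `d_a` on `Ẋ = X ∪ {∞}` (modelled as `Option X`,
with `none` playing the role of `∞`):
`d_a(x,y) = d(x,y)/(max{1,d(x,a)}·max{1,d(y,a)})` for `x, y ∈ X`,
`d_a(x,∞) = 1/max{1,d(x,a)}`, and `d_a(∞,∞) = 0`. -/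
noncomputable def chordal {X : Type*} [MetricSpace X] (a : X) :
    Option X → Option X → ℝ
  | some x, some y => dist x y / (max 1 (dist x a) * max 1 (dist y a))
  | some x, none => 1 / max 1 (dist x a)
  | none, some y => 1 / max 1 (dist y a)
  | none, none => 0

/-!
The function `x ↦ max 1 (d(x,a))` is the distance to a new point `b` adjoined to `X` such that
`X ∪ {b}` is still ultrametric. Hence `d_a(x,y) = d(x,y) / (d(x,b) d(y,b))` is the inversion of `d`
at `b`, and its strong triangle inequality is, after clearing denominators, Ptolemy's inequality
`d(x,y) d(z,b) ≤ max (d(x,z) d(y,b)) (d(x,b) d(z,y))`, which holds in every ultrametric space.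
When one of the three points is `∞`, it becomes the strong triangle inequality for a triangle with
vertex `b`.
-/

/-- Ptolemy's inequality for the edges of an ultrametric tetrahedron with opposite pairs `(a, b)`,
`(p, q)`, `(r, s)`: there is one strong triangle inequality for each face. -/
theorem mul_le_max_mul_mul_of_le_max {R : Type*} [CommSemiring R] [LinearOrder R] [IsOrderedRing R]
    {a b p q r s : R} (ha : 0 ≤ a) (hb : 0 ≤ b) (hapr : a ≤ max p r) (haqs : a ≤ max q s)
    (hbps : b ≤ max p s) (hbqr : b ≤ max q r) : a * b ≤ max (p * q) (r * s) := by
  wlog hba : b ≤ a generalizing a b r s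
  · rw [mul_comm a b, mul_comm r s]
    exact this hb ha hbps hbqr hapr haqs (le_of_not_ge hba)
  have le_pq (h : a ≤ p) (h' : b ≤ q) : a * b ≤ max (p * q) (r * s) :=
    le_max_of_le_left (mul_le_mul h h' hb (ha.trans h))
  have le_qp (h : a ≤ q) (h' : b ≤ p) : a * b ≤ max (p * q) (r * s) :=
    le_max_of_le_left (mul_comm p q ▸ mul_le_mul h h' hb (ha.trans h))
  have le_rs (h : a ≤ r) (h' : b ≤ s) : a * b ≤ max (p * q) (r * s) :=
    le_max_of_le_right (mul_le_mul h h' hb (ha.trans h))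
  have le_sr (h : a ≤ s) (h' : b ≤ r) : a * b ≤ max (p * q) (r * s) :=
    le_max_of_le_right (mul_comm r s ▸ mul_le_mul h h' hb (ha.trans h))
  rcases le_max_iff.1 hapr with hap | har <;> rcases le_max_iff.1 haqs with haq | has
  · exact le_pq hap (hba.trans haq)
  · exact (le_max_iff.1 hbqr).elim (le_pq hap) (le_sr has)
  · exact (le_max_iff.1 hbps).elim (le_qp haq) (le_rs har)
  · exact le_rs har (hba.trans has)

/-- An ultrametric Katětov function: `w` is the distance function to a point `b` in an ultrametric
extension `X ∪ {b}` of `X`. The two fields are the strong triangle inequalities for the triangles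
with vertex `b`. As for Katětov functions, `w x = 0` is allowed (then `b` coincides with `x`). -/
structure IsUltraKatetov {X : Type*} [Dist X] (w : X → ℝ) : Prop where
  le_max_dist : ∀ x y, w x ≤ max (dist x y) (w y)
  dist_le_max : ∀ x y, dist x y ≤ max (w x) (w y)

/-- The distance on `X ∪ {∞}` obtained by inversion at a point `b`, where `w x` is the distance
from `x` to `b`; `none` stands for `∞`, the image of `b`. The points of `X` are meant to differ
from `b`, that is, `w` should not vanish. -/
noncomputable def invertedDist {X : Type*} [Dist X] (w : X → ℝ) : Option X → Option X → ℝ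
  | some x, some y => dist x y / (w x * w y)
  | some x, none => 1 / w x
  | none, some y => 1 / w y
  | none, none => 0

theorem invertedDist_comm {X : Type*} [PseudoMetricSpace X] (w : X → ℝ) (p q : Option X) :
    invertedDist w p q = invertedDist w q p := by
  rcases p with _ | x <;> rcases q with _ | y <;> simp only [invertedDist]
  rw [dist_comm, mul_comm]

theorem invertedDist_eq_zero_iff {X : Type*} [MetricSpace X] {w : X → ℝ} (hw : ∀ x, w x ≠ 0)
    {p q : Option X} : invertedDist w p q = 0 ↔ p = q := by
  rcases p with _ | x <;> rcases q with _ | y <;> simp [invertedDist, hw]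

namespace IsUltraKatetov

section PseudoMetricSpace

variable {X : Type*} [PseudoMetricSpace X] {w : X → ℝ}

theorem nonneg (hw : IsUltraKatetov w) (x : X) : 0 ≤ w x := by
  simpa using hw.dist_le_max x x

theorem one_div_le_max (hw : IsUltraKatetov w) (hpos : ∀ x, 0 < w x) (x y : X) :
    1 / w x ≤ max (dist x y / (w x * w y)) (1 / w y) := by
  have hx := hpos x
  have hy := hpos y
  calc 1 / w x = w y / (w x * w y) := by field_simp
    _ ≤ max (dist x y) (w x) / (w x * w y) := by
      gcongr
      exact dist_comm x y ▸ hw.le_max_dist y x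
    _ = max (dist x y / (w x * w y)) (1 / w y) := by
      rw [← max_div_div_right (by positivity)]
      field_simp

theorem dist_div_le_max_one_div (hw : IsUltraKatetov w) (hpos : ∀ x, 0 < w x) (x y : X) :
    dist x y / (w x * w y) ≤ max (1 / w x) (1 / w y) := by
  have hx := hpos x
  have hy := hpos y
  calc dist x y / (w x * w y) ≤ max (w y) (w x) / (w x * w y) := by
        gcongr
        exact max_comm (w x) (w y) ▸ hw.dist_le_max x y
    _ = max (1 / w x) (1 / w y) := by
      rw [← max_div_div_right (by positivity)]
      field_simp

variable [IsUltrametricDist X]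

theorem max_dist (r : ℝ) (a : X) : IsUltraKatetov fun x ↦ max r (dist x a) where
  le_max_dist x y :=
    max_le (le_max_of_le_right (le_max_left r _))
      ((dist_triangle_max x y a).trans (max_le_max_left _ (le_max_right r _)))
  dist_le_max x y :=
    (dist_triangle_max x a y).trans
      (max_le_max (le_max_right r _) (dist_comm a y ▸ le_max_right r _))

theorem dist_mul_le_max (hw : IsUltraKatetov w) (x y z : X) :
    dist x y * w z ≤ max (dist x z * w y) (dist z y * w x) :=
  mul_le_max_mul_mul_of_le_max dist_nonneg (hw.nonneg z) (dist_triangle_max x z y)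
    (max_comm (w x) (w y) ▸ hw.dist_le_max x y) (dist_comm x z ▸ hw.le_max_dist z x)
    (max_comm (dist z y) (w y) ▸ hw.le_max_dist z y)

theorem dist_div_le_max (hw : IsUltraKatetov w) (hpos : ∀ x, 0 < w x) (x y z : X) :
    dist x y / (w x * w y) ≤ max (dist x z / (w x * w z)) (dist z y / (w z * w y)) := by
  have hx := hpos x
  have hy := hpos y
  have hz := hpos z
  calc dist x y / (w x * w y) = dist x y * w z / (w x * w y * w z) := by field_simp
    _ ≤ max (dist x z * w y) (dist z y * w x) / (w x * w y * w z) := by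
      gcongr
      exact hw.dist_mul_le_max x y z
    _ = max (dist x z / (w x * w z)) (dist z y / (w z * w y)) := by
      rw [← max_div_div_right (by positivity)]
      congr 1 <;> field_simp

theorem invertedDist_triangle_max (hw : IsUltraKatetov w) (hpos : ∀ x, 0 < w x)
    (p q r : Option X) :
    invertedDist w p q ≤ max (invertedDist w p r) (invertedDist w r q) := by
  rcases p with _ | x <;> rcases q with _ | y <;> rcases r with _ | z
  · exact le_max_left _ _
  · exact le_max_of_le_left (one_div_nonneg.2 (hw.nonneg z))
  · exact le_max_right _ _
  · rw [max_comm, invertedDist_comm w none, invertedDist_comm w (some z), invertedDist_comm w none]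
    exact hw.one_div_le_max hpos y z
  · exact le_max_left _ _
  · exact hw.one_div_le_max hpos x z
  · exact hw.dist_div_le_max_one_div hpos x y
  · exact hw.dist_div_le_max hpos x y z

end PseudoMetricSpace

end IsUltraKatetov

theorem chordal_eq_invertedDist {X : Type*} [MetricSpace X] (a : X) :
    chordal a = invertedDist fun x ↦ max 1 (dist x a) := by
  ext (_ | x) (_ | y) <;> rfl

theorem chordal_ultrametric_general {X : Type*} [MetricSpace X] [IsUltrametricDist X] {w : X → ℝ}
    (hw : IsUltraKatetov w) (hpos : ∀ x, 0 < w x) :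
    (∀ p q : Option X, invertedDist w p q = invertedDist w q p) ∧
    (∀ p q : Option X, invertedDist w p q = 0 ↔ p = q) ∧
    (∀ p q r : Option X,
      invertedDist w p q ≤ max (invertedDist w p r) (invertedDist w r q)) :=
  ⟨invertedDist_comm w, fun _ _ ↦ invertedDist_eq_zero_iff fun x ↦ (hpos x).ne',
    hw.invertedDist_triangle_max hpos⟩

/-- For an ultrametric space `(X,d)` with base point `a`, the
chordal function `d_a` is an ultrametric on `Ẋ = X ∪ {∞}`: it is symmetric,
vanishes exactly on the diagonal, and satisfies the strong triangle
inequality. -/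
theorem chordal_ultrametric {X : Type*} [MetricSpace X]
    (hu : ∀ x y z : X, dist x y ≤ max (dist x z) (dist z y)) (a : X) :
    (∀ p q : Option X, chordal a p q = chordal a q p) ∧
    (∀ p q : Option X, chordal a p q = 0 ↔ p = q) ∧
    (∀ p q r : Option X, chordal a p q ≤ max (chordal a p r) (chordal a r q)) := by
  have : IsUltrametricDist X := ⟨fun x y z ↦ hu x z y⟩
  rw [chordal_eq_invertedDist]
  exact chordal_ultrametric_general (.max_dist 1 a) fun x ↦ by positivity
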